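/- (Pointwise form of Theorem 2.) Let C ∈ Mat(2,ℂ) be anti-hermitian with tr C = 0, let D^ν ∈ Mat(2,ℂ) for ν ∈ {0,1,2,3}, and let κ_μ{}^ν be real numbers such that the lowered array κ_{μν} := Σ_λ κ_μ{}^λ g_{λν} is antisymmetric, κ_{μν} = −κ_{νμ}. If D^ν − [C, L^ν] = Σ_μ κ_μ{}^ν · L^μ for every ν ∈ {0,1,2,3}, then C is uniquely determined by the formula C = −(1/4)·( Σ_ν D^ν · L_ν − Σ_{μ,ν} κ_{μν} · L^μ · L^ν ). -/

import Mathlib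

open Matrix BigOperators

noncomputable section

/-- The Pauli basis of `Mat(2,ℂ)`: `σ^0 = I`, `σ^1, σ^2, σ^3` the Pauli matrices. -/
def σm : Fin 4 → Matrix (Fin 2) (Fin 2) ℂ :=
  ![1, !![0, 1; 1, 0], !![0, -Complex.I; Complex.I, 0], !![1, 0; 0, -1]]

/-- The Minkowski matrix `η = diag(1,-1,-1,-1)`. -/
def ηm : Fin 4 → Fin 4 → ℝ := fun a b => if a = b then (if a = 0 then 1 else -1) else 0

/-- Lowered-index Pauli matrices `σ_a := Σ_b η_{ab} σ^b`. -/
def σd (a : Fin 4) : Matrix (Fin 2) (Fin 2) ℂ := ∑ b, ηm a b • σm b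

/-- The conjugate matrix `M̃ := (tr M)·I − M`. -/
def mtilde (M : Matrix (Fin 2) (Fin 2) ℂ) : Matrix (Fin 2) (Fin 2) ℂ :=
  M.trace • (1 : Matrix (Fin 2) (Fin 2) ℂ) - M

/-- The contravariant metric `g^{μν} := Σ_{a,b} y^μ_a y^ν_b η^{ab}` built from a tetrad `y`. -/
def gUp (y : Matrix (Fin 4) (Fin 4) ℝ) : Matrix (Fin 4) (Fin 4) ℝ :=
  Matrix.of fun μ ν => ∑ a, ∑ b, y μ a * y ν b * ηm a b

/-- The covariant metric `g_{μν}`, the inverse matrix of `(g^{μν})`. -/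
def gDown (y : Matrix (Fin 4) (Fin 4) ℝ) : Matrix (Fin 4) (Fin 4) ℝ := (gUp y)⁻¹

/-- `K^μ := Σ_a y^μ_a σ^a ∈ Mat(2,ℂ)`. -/
def K (y : Matrix (Fin 4) (Fin 4) ℝ) (μ : Fin 4) : Matrix (Fin 2) (Fin 2) ℂ :=
  ∑ a, y μ a • σm a

/-- `K_μ := Σ_ν g_{μν} K^ν`. -/
def Kd (y : Matrix (Fin 4) (Fin 4) ℝ) (μ : Fin 4) : Matrix (Fin 2) (Fin 2) ℂ :=
  ∑ ν, gDown y μ ν • K y ν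

/-- `L^μ := K^μ − τ^μ·I`, the traceless part of `K^μ`, where `τ^μ := y^μ_0`. -/
def Lm (y : Matrix (Fin 4) (Fin 4) ℝ) (μ : Fin 4) : Matrix (Fin 2) (Fin 2) ℂ :=
  K y μ - (y μ 0 : ℂ) • (1 : Matrix (Fin 2) (Fin 2) ℂ)

/-- `L_μ := Σ_ν g_{μν} L^ν`. -/
def Ld (y : Matrix (Fin 4) (Fin 4) ℝ) (μ : Fin 4) : Matrix (Fin 2) (Fin 2) ℂ :=
  ∑ ν, gDown y μ ν • Lm y ν

/-- Pauli matrices with the zeroth one replaced by `0`. -/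
def Saux (a : Fin 4) : Matrix (Fin 2) (Fin 2) ℂ := if a = 0 then 0 else σm a

lemma Lm_eq_Saux (y : Matrix (Fin 4) (Fin 4) ℝ) (μ : Fin 4) :
    Lm y μ = ∑ a, y μ a • Saux a := by
  ext i j
  fin_cases i <;> fin_cases j <;>
    simp [Lm, K, Saux, σm, Fin.sum_univ_four]

lemma gDown_contract (y : Matrix (Fin 4) (Fin 4) ℝ) (hy : IsUnit y.det) :
    yᵀ * gDown y * y = Matrix.of ηm := by
  have hη : (Matrix.of ηm) * (Matrix.of ηm) = (1 : Matrix (Fin 4) (Fin 4) ℝ) := by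
    ext i j
    fin_cases i <;> fin_cases j <;> simp [Matrix.mul_apply, ηm, Fin.sum_univ_four]
  have hg : gUp y = y * Matrix.of ηm * yᵀ := by
    ext i j
    simp only [gUp, Matrix.mul_apply, Matrix.of_apply, Matrix.transpose_apply, Finset.sum_mul]
    rw [Finset.sum_comm]
    refine Finset.sum_congr rfl fun a _ => Finset.sum_congr rfl fun b _ => ?_
    ring
  have hyT : IsUnit yᵀ.det := by rwa [Matrix.det_transpose]
  have hinv : (Matrix.of ηm)⁻¹ = (Matrix.of ηm : Matrix (Fin 4) (Fin 4) ℝ) :=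
    Matrix.inv_eq_left_inv hη
  rw [gDown, hg, Matrix.mul_inv_rev, Matrix.mul_inv_rev, hinv, Matrix.mul_assoc, Matrix.mul_assoc,
    Matrix.mul_assoc, Matrix.nonsing_inv_mul _ hy, Matrix.mul_one, ← Matrix.mul_assoc,
    Matrix.mul_nonsing_inv _ hyT, Matrix.one_mul]

lemma sandwich (y : Matrix (Fin 4) (Fin 4) ℝ) (hy : IsUnit y.det)
    (X : Matrix (Fin 2) (Fin 2) ℂ) :
    ∑ ν, Lm y ν * X * Ld y ν = ∑ a, ∑ b, ηm a b • (Saux a * X * Saux b) := by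
  have h : ∀ a b, ηm a b = ∑ l, ∑ ν, y ν a * gDown y ν l * y l b := by
    intro a b
    have := congrFun (congrFun (gDown_contract y hy) a) b
    simp only [Matrix.mul_apply, Matrix.of_apply, Matrix.transpose_apply, Finset.sum_mul] at this
    exact this.symm
  simp only [h, Ld, Lm_eq_Saux, Fin.sum_univ_four, Matrix.add_mul, Matrix.mul_add, smul_add,
    add_smul, Matrix.smul_mul, Matrix.mul_smul, smul_smul]
  module

lemma sandwich_eval (X : Matrix (Fin 2) (Fin 2) ℂ) :
    ∑ a, ∑ b, ηm a b • (Saux a * X * Saux b)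
      = X - (2 * X.trace) • (1 : Matrix (Fin 2) (Fin 2) ℂ) := by
  have hI := Complex.I_mul_I
  rw [Matrix.eta_fin_two X]
  generalize X 0 0 = p
  generalize X 0 1 = q
  generalize X 1 0 = r
  generalize X 1 1 = s
  ext i j
  fin_cases i <;> fin_cases j <;>
    simp [ηm, Saux, σm, Fin.sum_univ_four, Matrix.trace, Fin.sum_univ_two] <;>
    ring_nf <;> simp <;> ring

/-- Pointwise form of Theorem 2: if `C` is anti-hermitian and traceless, the
lowered array `κ_{μν} := Σ_λ κ_μ{}^λ g_{λν}` is antisymmetric, and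
`D^ν − [C, L^ν] = Σ_μ κ_μ{}^ν L^μ` for all `ν`, then
`C = −(1/4)(Σ_ν D^ν L_ν − Σ_{μ,ν} κ_{μν} L^μ L^ν)`. -/
theorem C_from_primitive_equation (y : Matrix (Fin 4) (Fin 4) ℝ) (hy : IsUnit y.det)
    (C : Matrix (Fin 2) (Fin 2) ℂ) (hCah : Cᴴ = -C) (hCtr : C.trace = 0)
    (D : Fin 4 → Matrix (Fin 2) (Fin 2) ℂ) (κ : Fin 4 → Fin 4 → ℝ)
    (hκ : ∀ μ ν : Fin 4, (∑ l, κ μ l * gDown y l ν) = -(∑ l, κ ν l * gDown y l μ))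
    (heq : ∀ ν : Fin 4, D ν - (C * Lm y ν - Lm y ν * C) = ∑ μ, (κ μ ν : ℝ) • Lm y μ) :
    C = -((1 / 4 : ℂ) • ((∑ ν, D ν * Ld y ν)
          - ∑ μ, ∑ ν, ((∑ l, κ μ l * gDown y l ν : ℝ) : ℂ) • (Lm y μ * Lm y ν))) := by
  have hD : ∀ ν, D ν = (C * Lm y ν - Lm y ν * C) + ∑ μ, (κ μ ν : ℝ) • Lm y μ := fun ν => by
    rw [← heq ν]; abel
  have h1 : ∑ ν, Lm y ν * Ld y ν = (-3 : ℂ) • (1 : Matrix (Fin 2) (Fin 2) ℂ) := by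
    have := (sandwich y hy 1).trans (sandwich_eval 1)
    simp only [Matrix.mul_one] at this
    rw [this, Matrix.trace_one]
    simp only [Fintype.card_fin]
    module
  have h2 : ∑ ν, Lm y ν * C * Ld y ν = C := by
    rw [sandwich y hy C, sandwich_eval, hCtr]
    simp
  have h3 : ∑ ν, (∑ μ, (κ μ ν : ℝ) • Lm y μ) * Ld y ν
      = ∑ μ, ∑ ν, ((∑ l, κ μ l * gDown y l ν : ℝ) : ℂ) • (Lm y μ * Lm y ν) := by
    simp only [Complex.coe_smul, Ld, Fin.sum_univ_four, Matrix.add_mul, Matrix.mul_add, smul_add,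
      add_smul, Matrix.smul_mul, Matrix.mul_smul, smul_smul]
    module
  have h4 : ∑ ν, D ν * Ld y ν = C * (∑ ν, Lm y ν * Ld y ν) - ∑ ν, Lm y ν * C * Ld y ν
      + ∑ ν, (∑ μ, (κ μ ν : ℝ) • Lm y μ) * Ld y ν := by
    rw [Finset.mul_sum, ← Finset.sum_sub_distrib, ← Finset.sum_add_distrib]
    refine Finset.sum_congr rfl fun ν _ => ?_
    rw [hD ν, Matrix.add_mul, Matrix.sub_mul, Matrix.mul_assoc C]
  rw [h4, h1, h2, h3, Matrix.mul_smul, Matrix.mul_one]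
  module
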